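/- Let d be a Schur root of Q. Then there exists an open ball B in {θ : θ·d = 0} around the canonical stability parameter θ_d such that for all η ∈ B and all proper nonzero generic subdimension vectors e ↪ d, one has η(e) < 0; consequently B is contained in the semistable cone of d, and the semistable cone spans the stability space. -/

import Mathlib

open scoped BigOperators

/-- A representation of a quiver with vertex set `Q0` and arrow set `Q1`
(with source and target maps `s t : Q1 → Q0`) over a field `k`:
a finite-dimensional `k`-vector space at each vertex and a linear map for each arrow. -/
structure QRep (k : Type) [Field k] {Q0 Q1 : Type} (s t : Q1 → Q0) where
  V : Q0 → Type
  [addgrp : ∀ i, AddCommGroup (V i)]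
  [mod : ∀ i, Module k (V i)]
  [fd : ∀ i, FiniteDimensional k (V i)]
  hom : ∀ a : Q1, V (s a) →ₗ[k] V (t a)

attribute [instance] QRep.addgrp QRep.mod QRep.fd

namespace QRep

variable {k : Type} [Field k] {Q0 Q1 : Type} {s t : Q1 → Q0}

/-- The dimension vector of a representation. -/
noncomputable def dimVec (M : QRep k s t) : Q0 → ℕ := fun i => Module.finrank k (M.V i)

/-- A family of subspaces is a subrepresentation if it is invariant under all arrow maps. -/
def IsSubrep (M : QRep k s t) (U : ∀ i, Submodule k (M.V i)) : Prop :=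
  ∀ a : Q1, ∀ x ∈ U (s a), M.hom a x ∈ U (t a)

/-- The dimension vector of a family of subspaces. -/
noncomputable def subDim (M : QRep k s t) (U : ∀ i, Submodule k (M.V i)) : Q0 → ℕ :=
  fun i => Module.finrank k (U i)

/-- The subrepresentation determined by an invariant family of subspaces. -/
def subRep (M : QRep k s t) (U : ∀ i, Submodule k (M.V i)) (h : M.IsSubrep U) :
    QRep k s t where
  V := fun i => U i
  hom := fun a => (M.hom a).restrict (fun x hx => h a x hx)

/-- The quotient representation by an invariant family of subspaces. -/
def quotRep (M : QRep k s t) (U : ∀ i, Submodule k (M.V i)) (h : M.IsSubrep U) :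
    QRep k s t where
  V := fun i => M.V i ⧸ U i
  hom := fun a => (U (s a)).mapQ (U (t a)) (M.hom a) (fun x hx => h a x hx)

/-- Direct sum of two representations. -/
def dsum (M N : QRep k s t) : QRep k s t where
  V := fun i => M.V i × N.V i
  hom := fun a => (M.hom a).prodMap (N.hom a)

variable [Fintype Q0]

/-- The pairing `θ(d) = θ · d` of a stability parameter with a dimension vector. -/
def pair (θ : Q0 → ℝ) (d : Q0 → ℕ) : ℝ := ∑ i, θ i * (d i : ℝ)

/-- `θ`-semistability: `θ(M) = 0` and `θ(M') ≤ 0` for all subrepresentations. -/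
def Semistable (θ : Q0 → ℝ) (M : QRep k s t) : Prop :=
  pair θ M.dimVec = 0 ∧
    ∀ U : ∀ i, Submodule k (M.V i), M.IsSubrep U → pair θ (M.subDim U) ≤ 0

/-- `θ`-stability: `θ(M) = 0` and `θ(M') < 0` for all proper nonzero subrepresentations. -/
def Stable (θ : Q0 → ℝ) (M : QRep k s t) : Prop :=
  pair θ M.dimVec = 0 ∧
    ∀ U : ∀ i, Submodule k (M.V i), M.IsSubrep U →
      U ≠ (fun _ => ⊥) → U ≠ (fun _ => ⊤) → pair θ (M.subDim U) < 0

end QRep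

section Defs

variable (k : Type) [Field k] {Q0 Q1 : Type} (s t : Q1 → Q0)

/-- `e` is a generic subdimension vector of `d` (Schofield's characterization as definition):
every representation of dimension vector `d` admits a subrepresentation of dimension vector `e`. -/
def GenericSub (e d : Q0 → ℕ) : Prop :=
  e ≤ d ∧ ∀ M : QRep k s t, M.dimVec = d →
    ∃ U : ∀ i, Submodule k (M.V i), M.IsSubrep U ∧ M.subDim U = e

variable [Fintype Q0]

/-- The semistable cone of `d`: stability parameters orthogonal to `d` admitting a
semistable representation of dimension vector `d`. -/
def SstCone (d : Q0 → ℕ) : Set (Q0 → ℝ) :=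
  {θ | QRep.pair θ d = 0 ∧ ∃ M : QRep k s t, M.dimVec = d ∧ QRep.Semistable θ M}

/-- The wall `W_e`: parameters `θ` orthogonal to `d` and `e` such that some `θ`-semistable
representation of dimension vector `d` has a subrepresentation of dimension vector `e`. -/
def Wall (d e : Q0 → ℕ) : Set (Q0 → ℝ) :=
  {θ | QRep.pair θ d = 0 ∧ QRep.pair θ e = 0 ∧
    ∃ (M : QRep k s t) (U : ∀ i, Submodule k (M.V i)),
      M.dimVec = d ∧ M.IsSubrep U ∧ M.subDim U = e ∧ QRep.Semistable θ M}

/-- GIT equivalence of stability parameters: equal semistable loci. -/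
def GITEquiv (d : Q0 → ℕ) (θ η : Q0 → ℝ) : Prop :=
  ∀ M : QRep k s t, M.dimVec = d → (QRep.Semistable θ M ↔ QRep.Semistable η M)

end Defs

/-- The hyperplane `H_e` inside the stability space of `d`. -/
def Hset {Q0 : Type} [Fintype Q0] (d e : Q0 → ℕ) : Set (Q0 → ℝ) :=
  {θ | QRep.pair θ d = 0 ∧ QRep.pair θ e = 0}

section Euler

variable {Q0 Q1 : Type} [Fintype Q0] [Fintype Q1]

/-- The Euler form of the quiver. -/
def euler (s t : Q1 → Q0) (x y : Q0 → ℤ) : ℤ :=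
  (∑ i, x i * y i) - ∑ a, x (s a) * y (t a)

/-- `ext(d, e)`: the maximum of `−⟨d', e⟩` over generic subdimension vectors `d' ↪ d`. -/
noncomputable def extGen (k : Type) [Field k] (s t : Q1 → Q0) (d e : Q0 → ℕ) : ℤ :=
  sSup {z : ℤ | ∃ d' : Q0 → ℕ, GenericSub k s t d' d ∧
    z = -(euler s t (fun i => (d' i : ℤ)) (fun i => (e i : ℤ)))}

end Euler

section Schur

variable {Q0 Q1 : Type} (s t : Q1 → Q0)

/-- Coordinates on the representation space `Rep(Q, d)`. -/
def RepCoords (d : Q0 → ℕ) : Type := Σ a : Q1, Fin (d (t a)) × Fin (d (s a))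

/-- The representation associated to a point of the representation space. -/
def matToRep (k : Type) [Field k] (d : Q0 → ℕ)
    (m : ∀ a : Q1, Matrix (Fin (d (t a))) (Fin (d (s a))) k) : QRep k s t where
  V := fun i => Fin (d i) → k
  hom := fun a => Matrix.mulVecLin (m a)

/-- A nonzero representation is indecomposable if it is not a direct sum of two nonzero
subrepresentations. -/
def Indecomposable (k : Type) [Field k] (M : QRep k s t) : Prop :=
  (∃ i, Module.finrank k (M.V i) ≠ 0) ∧
    ¬ ∃ U W : ∀ i, Submodule k (M.V i), M.IsSubrep U ∧ M.IsSubrep W ∧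
        U ≠ (fun _ => ⊥) ∧ W ≠ (fun _ => ⊥) ∧ ∀ i, IsCompl (U i) (W i)

/-- `d` is a Schur root: a general representation of dimension vector `d` is indecomposable,
i.e. all representations outside the vanishing locus of some nonzero polynomial on the
representation space are indecomposable. -/
def IsSchurRoot (k : Type) [Field k] (d : Q0 → ℕ) : Prop :=
  ∃ p : MvPolynomial (RepCoords s t d) k, p ≠ 0 ∧
    ∀ m : ∀ a : Q1, Matrix (Fin (d (t a))) (Fin (d (s a))) k,
      MvPolynomial.eval (fun x => m x.1 x.2.1 x.2.2) p ≠ 0 →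
        Indecomposable s t k (matToRep s t k d m)

end Schur

/-!
A general representation `M` of dimension vector `d` is indecomposable, because `d` is a Schur root.
It has no nonzero endomorphism `f` with `f² = 0`: given such an `f`, some line through `M` consists,
apart from `M`, of representations with a nontrivial idempotent endomorphism. Finally
`0 ≤ ⟨U, M/U⟩` for every subrepresentation `U` of `M`, because the representations with a
subrepresentation of dimension vector `e` depend on `dim Rep(Q, d) + ⟨e, d - e⟩` parameters.

Let `U` be proper and nonzero. The map
`⨁ᵢ Hom((M/U)ᵢ, Uᵢ) → ⨁ₐ Hom((M/U)_{s a}, U_{t a})` with kernel `Hom(M/U, U)` and cokernel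
`Ext¹(M/U, U)` is injective, since a homomorphism `M/U → U` gives an endomorphism of `M` of square
zero, and it is not surjective, since `0 → U → M → M/U → 0` does not split. Hence `⟨M/U, U⟩ < 0`
and `θ_d(U) = ⟨M/U, U⟩ - ⟨U, M/U⟩ < 0`, i.e. `M` is `θ_d`-stable. Only finitely many dimension
vectors of subrepresentations occur, so `M` stays `η`-stable for all `η` near `θ_d` with
`η(d) = 0`. A generic subdimension vector of `d` is in particular the dimension vector of a
subrepresentation of `M`.
-/

section ZariskiGeneric

open MvPolynomial

variable {ι σ R : Type*} [CommRing R]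

theorem eval_aeval_eq_eval (x : ι → R) (f : σ → MvPolynomial ι R) (p : MvPolynomial σ R) :
    eval x (aeval f p) = eval (fun i => eval x (f i)) p := by
  simp only [← aeval_eq_eval, comp_aeval_apply]

variable [IsDomain R]

/-- The filter of Zariski-generic properties on the affine space `σ → R`: a set belongs to it if it
contains the nonvanishing locus of some nonzero polynomial. -/
def zariskiGeneric (σ R : Type*) [CommRing R] [IsDomain R] : Filter (σ → R) where
  sets := {S | ∃ p : MvPolynomial σ R, p ≠ 0 ∧ ∀ x, eval x p ≠ 0 → x ∈ S}
  univ_sets := ⟨1, one_ne_zero, fun _ _ => trivial⟩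
  sets_of_superset := fun ⟨p, hp, hS⟩ hST => ⟨p, hp, fun x hx => hST (hS x hx)⟩
  inter_sets := fun ⟨p, hp, hS⟩ ⟨q, hq, hT⟩ => ⟨p * q, mul_ne_zero hp hq, fun x hx => by
    rw [map_mul] at hx
    exact ⟨hS x (left_ne_zero_of_mul hx), hT x (right_ne_zero_of_mul hx)⟩⟩

instance zariskiGeneric_neBot [Infinite R] : (zariskiGeneric σ R).NeBot where
  ne' hbot := by
    obtain ⟨p, hp, hempty⟩ := Filter.empty_mem_iff_bot.mpr hbot
    refine hp (MvPolynomial.funext fun x => ?_)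
    by_contra hx
    exact hempty x (by simpa using hx)

/-- The restriction of a nonzero polynomial to a line through a point where it does not vanish is a
nonzero polynomial in one variable. -/
theorem eventually_forall_exists_add_smul [Infinite R] {P : (σ → R) → Prop}
    (hP : ∀ᶠ x in zariskiGeneric σ R, P x) :
    ∀ᶠ x in zariskiGeneric σ R, ∀ v : σ → R, ∃ c ≠ (0 : R), P (x + c • v) := by
  obtain ⟨p, hp, hpP⟩ := hP
  refine ⟨p, hp, fun x hx v => ?_⟩
  let f : Polynomial R := aeval (fun i => Polynomial.C (x i) + Polynomial.X * Polynomial.C (v i)) p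
  have eval_f (c : R) : f.eval c = eval (x + c • v) p := by
    rw [← Polynomial.coe_aeval_eq_eval, comp_aeval_apply, ← aeval_eq_eval]
    exact congrArg (aeval · p) (funext fun i => by simp [mul_comm c])
  have hf : Polynomial.X * f ≠ 0 := by
    refine mul_ne_zero Polynomial.X_ne_zero fun hf => hx ?_
    simpa [hf] using (eval_f 0).symm
  obtain ⟨c, hc⟩ : ∃ c, (Polynomial.X * f).eval c ≠ 0 := by
    by_contra! hzero
    exact hf (Polynomial.funext fun c => by simpa using hzero c)
  rw [Polynomial.eval_mul, Polynomial.eval_X, eval_f] at hc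
  exact ⟨c, left_ne_zero_of_mul hc, hpP _ (right_ne_zero_of_mul hc)⟩

theorem not_algebraicIndependent_of_card_lt [Fintype ι] [Fintype σ]
    (h : Fintype.card ι < Fintype.card σ) (P : σ → MvPolynomial ι R) :
    ¬ AlgebraicIndependent R P := by
  intro hP
  have hle := hP.lift_cardinalMk_le_trdeg
  simp only [trdeg_of_isDomain, Cardinal.mk_fintype, Cardinal.lift_natCast, Nat.cast_le] at hle
  exact h.not_ge hle

theorem eventually_forall_ne_eval [Fintype σ] (P : σ → MvPolynomial ι R) (T : Finset ι)
    (hT : T.card < Fintype.card σ) :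
    ∀ᶠ x in zariskiGeneric σ R, ∀ z : ι → R, (∀ i ∉ T, z i = 0) → x ≠ fun j => eval z (P j) := by
  classical
  let restrict : MvPolynomial ι R →ₐ[R] MvPolynomial T R :=
    aeval fun i => if hi : i ∈ T then X ⟨i, hi⟩ else 0
  have eval_restrict (z : ι → R) (hz : ∀ i ∉ T, z i = 0) (p : MvPolynomial ι R) :
      eval (fun i : T => z i) (restrict p) = eval z p := by
    rw [eval_aeval_eq_eval]
    congr 2 with i
    by_cases hi : i ∈ T <;> simp [hi, hz]
  obtain ⟨q, hq, hq0⟩ : ∃ q : MvPolynomial σ R, aeval (fun j => restrict (P j)) q = 0 ∧ q ≠ 0 := by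
    simpa [algebraicIndependent_iff] using
      not_algebraicIndependent_of_card_lt (by simpa using hT) fun j => restrict (P j)
  refine ⟨q, hq0, fun x hx z hz hxz => hx ?_⟩
  calc eval x q = eval (fun i : T => z i) (aeval (fun j => restrict (P j)) q) := by
        simp only [eval_aeval_eq_eval, eval_restrict z hz, hxz]
    _ = 0 := by rw [hq, map_zero]

end ZariskiGeneric

section LinearAlgebra

variable {k : Type*} [Field k]

theorem exists_basis_of_span_range_eq_top {ι V : Type*} [AddCommGroup V] [Module k V] {w : ι → V}
    (hw : Submodule.span k (Set.range w) = ⊤) :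
    ∃ (S : Set ι) (b : Module.Basis S k V), ∀ i : S, b i = w i := by
  obtain ⟨S, -, -, hspan, hli⟩ := exists_linearIndepOn_extension (K := k) (v := w)
    (linearIndepOn_empty k w) (Set.empty_subset Set.univ)
  rw [Set.image_univ, ← Submodule.span_le, hw, Set.image_eq_range] at hspan
  exact ⟨S, .mk hli hspan, fun i => Module.Basis.mk_apply hli hspan i⟩

/-- The rows in `S` are chosen so that the corresponding coordinate vectors form a basis of the
quotient by `U`; then `U` is the graph of a map from the remaining coordinates to these. -/
theorem exists_matrix_mem_iff_sub_mulVec_eq_zero {n : Type*} [Fintype n] [DecidableEq n]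
    (U : Submodule k (n → k)) :
    ∃ (S : Finset n) (F : Matrix n n k), S.card = Module.finrank k ((n → k) ⧸ U) ∧
      (∀ r c, ¬ (r ∈ S ∧ c ∉ S) → F r c = 0) ∧
      ∀ v, v ∈ U ↔ ∀ r ∈ S, ((1 - F).mulVec v) r = 0 := by
  classical
  have span_range : Submodule.span k (Set.range (U.mkQ ∘ Pi.basisFun k n)) = ⊤ := by
    rw [Set.range_comp, ← Submodule.map_span, (Pi.basisFun k n).span_eq, Submodule.map_top,
      Submodule.range_mkQ]
  obtain ⟨S, b, hb⟩ := exists_basis_of_span_range_eq_top span_range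
  let F : Matrix n n k := .of fun r c =>
    if h : r ∈ S ∧ c ∉ S then -b.coord ⟨r, h.1⟩ (U.mkQ (Pi.basisFun k n c)) else 0
  have mulVec_eq_coord (r : S) (v : n → k) : ((1 - F).mulVec v) r = b.coord r (U.mkQ v) := by
    suffices LinearMap.proj (r : n) ∘ₗ (1 - F).mulVecLin = b.coord r ∘ₗ U.mkQ from
      LinearMap.congr_fun this v
    refine (Pi.basisFun k n).ext fun c => ?_
    by_cases hc : c ∈ S
    · have hbc : U.mkQ (Pi.basisFun k n c) = b ⟨c, hc⟩ := (hb ⟨c, hc⟩).symm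
      rw [LinearMap.comp_apply, LinearMap.comp_apply, hbc]
      simp [F, hc, Pi.single_apply, Finsupp.single_apply, Subtype.ext_iff, eq_comm]
    · have hrc : (r : n) ≠ c := fun h => hc (h ▸ r.2)
      simp [F, hc, hrc]
  refine ⟨S.toFinset, F, ?_, fun r c h => dif_neg (by simpa using h), fun v => ?_⟩
  · rw [Module.finrank_eq_card_basis b, Set.toFinset_card]
  · rw [← U.ker_mkQ, LinearMap.mem_ker, ← b.forall_coord_eq_zero_iff]
    simp only [← mulVec_eq_coord, Set.mem_toFinset, Subtype.forall]

theorem mul_self_eq_zero_of_apply_eq_zero {n R : Type*} [Fintype n] [NonUnitalNonAssocSemiring R]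
    {S : Finset n} {F : Matrix n n R} (hF : ∀ r c, ¬ (r ∈ S ∧ c ∉ S) → F r c = 0) : F * F = 0 := by
  ext r c
  refine Finset.sum_eq_zero fun j _ => ?_
  by_cases hj : j ∈ S
  · exact (congrArg (· * F j c) (hF r j fun h => h.2 hj)).trans (zero_mul _)
  · exact (congrArg (F r j * ·) (hF j c fun h => hj h.1)).trans (mul_zero _)

/-- If `z` is any generalized inverse of `x`, then `z - x z²` is one with the extra property. -/
theorem exists_generalizedInverse_comp_comp_eq_zero {V : Type*} [AddCommGroup V] [Module k V]
    (x : V →ₗ[k] V) (hx : x ∘ₗ x = 0) :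
    ∃ y : V →ₗ[k] V, x ∘ₗ y ∘ₗ x = x ∧ x ∘ₗ y ∘ₗ y = 0 := by
  obtain ⟨r, hr⟩ := x.rangeRestrict.exists_rightInverse_of_surjective x.range_rangeRestrict
  obtain ⟨z, hz⟩ := LinearMap.exists_extend r
  have hxx (v : V) : x (x v) = 0 := LinearMap.congr_fun hx v
  have hxzx (v : V) : x (z (x v)) = x v := by
    have hzx : z (x v) = r (x.rangeRestrict v) := LinearMap.congr_fun hz (x.rangeRestrict v)
    rw [hzx]
    exact congrArg Subtype.val (LinearMap.congr_fun hr (x.rangeRestrict v))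
  refine ⟨z - x ∘ₗ z ∘ₗ z, ?_, ?_⟩ <;> ext v <;> simp [hxx, hxzx]

/-- A nonzero endomorphism of square zero is a limit of multiples of idempotents: with `y` a
generalized inverse of `x`, take `e = c⁻¹ x + x y`, so that `c e → x` as `c → 0`. The
perturbation `N` is chosen to make `e` commute with the perturbed arrows. -/
theorem exists_deformation_isIdempotentElem {Q0 Q1 : Type*} {s t : Q1 → Q0} {V : Q0 → Type*}
    [∀ i, AddCommGroup (V i)] [∀ i, Module k (V i)] (A : ∀ a, V (s a) →ₗ[k] V (t a))
    (x : ∀ i, V i →ₗ[k] V i) (hx : ∀ i, x i ∘ₗ x i = 0)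
    (hA : ∀ a, x (t a) ∘ₗ A a = A a ∘ₗ x (s a)) :
    ∃ N : ∀ a, V (s a) →ₗ[k] V (t a), ∀ c ≠ (0 : k), ∃ e : ∀ i, V i →ₗ[k] V i,
      (∀ i, IsIdempotentElem (e i)) ∧
      (∀ a, e (t a) ∘ₗ (A a + c • N a) = (A a + c • N a) ∘ₗ e (s a)) ∧
      ∀ i, e i ∘ₗ x i = x i ∧ x i ∘ₗ e i = 0 := by
  choose y hxyx hxyy using fun i => exists_generalizedInverse_comp_comp_eq_zero (x i) (hx i)
  replace hx (i) (v : V i) : x i (x i v) = 0 := LinearMap.congr_fun (hx i) v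
  replace hxyx (i) (v : V i) : x i (y i (x i v)) = x i v := LinearMap.congr_fun (hxyx i) v
  replace hxyy (i) (v : V i) : x i (y i (y i v)) = 0 := LinearMap.congr_fun (hxyy i) v
  replace hA (a) (v : V (s a)) : A a (x (s a) v) = x (t a) (A a v) :=
    (LinearMap.congr_fun (hA a) v).symm
  refine ⟨fun a => y (t a) ∘ₗ (A a ∘ₗ x (s a) ∘ₗ y (s a) - x (t a) ∘ₗ y (t a) ∘ₗ A a),
    fun c hc => ⟨fun i => c⁻¹ • x i + x i ∘ₗ y i, fun i => ?_, fun a => ?_, fun i => ⟨?_, ?_⟩⟩⟩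
  · ext v
    simp [hx, hxyx]
  · ext v
    simp [hxyx, hxyy, hA, smul_smul, hc]
    abel
  · ext v
    simp [hx, hxyx]
  · ext v
    simp [hx]

end LinearAlgebra

section Topology

open Topology

theorem span_eq_of_mem_nhdsWithin {𝕜 E : Type*} [NontriviallyNormedField 𝕜] [AddCommGroup E]
    [Module 𝕜 E] [TopologicalSpace E] [IsTopologicalAddGroup E] [ContinuousSMul 𝕜 E]
    {H : Submodule 𝕜 E} {C : Set E} (hCH : C ⊆ H) {x : E} (hxH : x ∈ H)
    (hC : C ∈ 𝓝[H] x) : Submodule.span 𝕜 C = H := by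
  refine le_antisymm (Submodule.span_le.mpr hCH) (Submodule.comap_subtype_eq_top.mp ?_)
  refine Submodule.eq_top_of_nonempty_interior' _ ⟨⟨x, hxH⟩, mem_interior_iff_mem_nhds.mpr ?_⟩
  exact Filter.mem_of_superset (preimage_coe_mem_nhds_subtype.mpr hC)
    fun y hy => Submodule.subset_span hy

end Topology

namespace QRep

section Morphisms

variable {k : Type} [Field k] {Q0 Q1 : Type} {s t : Q1 → Q0} {L M N : QRep k s t}

/-- A family of linear maps, one for each vertex, is a morphism of representations if it commutes
with all arrow maps. -/
def IsHom (M N : QRep k s t) (f : ∀ i, M.V i →ₗ[k] N.V i) : Prop :=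
  ∀ a, f (t a) ∘ₗ M.hom a = N.hom a ∘ₗ f (s a)

/-- The endomorphism ring of `M` is reduced. If moreover `M` is indecomposable and `k` is
algebraically closed, this says that all endomorphisms of `M` are scalars. -/
def HasReducedEnd (M : QRep k s t) : Prop :=
  ∀ f, IsHom M M f → (∀ i, f i ∘ₗ f i = 0) → f = 0

theorem isHom_id (M : QRep k s t) : IsHom M M fun _ => LinearMap.id :=
  fun _ => rfl

theorem IsHom.comp {g : ∀ i, M.V i →ₗ[k] N.V i} {f : ∀ i, L.V i →ₗ[k] M.V i} (hg : IsHom M N g)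
    (hf : IsHom L M f) : IsHom L N fun i => g i ∘ₗ f i := fun a => by
  rw [LinearMap.comp_assoc, hf a, ← LinearMap.comp_assoc, hg a, LinearMap.comp_assoc]

theorem IsHom.isSubrep_ker {f : ∀ i, M.V i →ₗ[k] N.V i} (hf : IsHom M N f) :
    M.IsSubrep fun i => LinearMap.ker (f i) := fun a v hv => by
  have hcomm : f (t a) (M.hom a v) = N.hom a (f (s a) v) := LinearMap.congr_fun (hf a) v
  rw [LinearMap.mem_ker] at hv ⊢
  rw [hcomm, hv, map_zero]

theorem IsHom.isSubrep_range {f : ∀ i, M.V i →ₗ[k] N.V i} (hf : IsHom M N f) :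
    N.IsSubrep fun i => LinearMap.range (f i) := by
  rintro a _ ⟨v, rfl⟩
  exact ⟨M.hom a v, LinearMap.congr_fun (hf a) v⟩

theorem isHom_subtype (U : ∀ i, Submodule k (M.V i)) (hU : M.IsSubrep U) :
    IsHom (M.subRep U hU) M fun i => (U i).subtype :=
  fun _ => rfl

theorem isHom_mkQ (U : ∀ i, Submodule k (M.V i)) (hU : M.IsSubrep U) :
    IsHom M (M.quotRep U hU) fun i => (U i).mkQ :=
  fun _ => rfl

theorem subDim_le_dimVec (U : ∀ i, Submodule k (M.V i)) : M.subDim U ≤ M.dimVec :=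
  fun i => (U i).finrank_le

theorem dimVec_subRep_add_dimVec_quotRep {U : ∀ i, Submodule k (M.V i)} (hU : M.IsSubrep U) :
    (M.subRep U hU).dimVec + (M.quotRep U hU).dimVec = M.dimVec :=
  funext fun i => (add_comm _ _).trans (U i).finrank_quotient_add_finrank

end Morphisms

end QRep

namespace Indecomposable

open QRep

variable {k : Type} [Field k] {Q0 Q1 : Type} {s t : Q1 → Q0} {M N : QRep k s t}

theorem eq_zero_or_eq_id (hM : Indecomposable s t k M) {e : ∀ i, M.V i →ₗ[k] M.V i}
    (he : IsHom M M e) (hidem : ∀ i, IsIdempotentElem (e i)) :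
    (∀ i, e i = 0) ∨ ∀ i, e i = LinearMap.id := by
  by_contra! h
  obtain ⟨⟨i, hi⟩, ⟨j, hj⟩⟩ := h
  refine hM.2 ⟨_, _, he.isSubrep_range, he.isSubrep_ker, fun hrange => hi ?_, fun hker => hj ?_,
    fun i => LinearMap.IsIdempotentElem.isCompl (hidem i)⟩
  · exact LinearMap.range_eq_bot.mp (congrFun hrange i)
  · ext v
    have hv : e j v - v ∈ LinearMap.ker (e j) := by
      rw [LinearMap.mem_ker, map_sub, sub_eq_zero]
      exact LinearMap.congr_fun (hidem j) v
    rw [congrFun hker j, Submodule.mem_bot] at hv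
    exact sub_eq_zero.mp hv

theorem eq_zero_or_injective_of_comp_eq_id (hM : Indecomposable s t k M)
    {p : ∀ i, M.V i →ₗ[k] N.V i} {q : ∀ i, N.V i →ₗ[k] M.V i} (hp : IsHom M N p)
    (hq : IsHom N M q) (hpq : ∀ i, p i ∘ₗ q i = LinearMap.id) :
    (∀ i, p i = 0) ∨ ∀ i, Function.Injective (p i) := by
  have hpq' (i) (v : N.V i) : p i (q i v) = v := LinearMap.congr_fun (hpq i) v
  refine (hM.eq_zero_or_eq_id (hq.comp hp) fun i => ?_).imp (fun h i => ?_) (fun h i => ?_)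
  · ext v
    exact congrArg (q i) (hpq' i (p i v))
  · ext v
    have hqp : q i (p i v) = 0 := LinearMap.congr_fun (h i) v
    rw [← hpq' i (p i v), hqp, map_zero, LinearMap.zero_apply]
  · exact Function.LeftInverse.injective (LinearMap.congr_fun (h i))

end Indecomposable

namespace QRep

section RingelMap

variable {k : Type} [Field k] {Q0 Q1 : Type} {s t : Q1 → Q0}

/-- The map whose kernel is `Hom(M, N)` and whose cokernel is `Ext¹(M, N)`. -/
def ringelMap (M N : QRep k s t) :
    (∀ i, M.V i →ₗ[k] N.V i) →ₗ[k] ∀ a, M.V (s a) →ₗ[k] N.V (t a) where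
  toFun f a := f (t a) ∘ₗ M.hom a - N.hom a ∘ₗ f (s a)
  map_add' f g := by
    ext a v
    simp only [Pi.add_apply, LinearMap.sub_apply, LinearMap.comp_apply, LinearMap.add_apply,
      map_add]
    abel
  map_smul' c f := by
    ext a v
    simp [smul_sub]

variable {L M N : QRep k s t} {ι : ∀ i, L.V i →ₗ[k] M.V i} {π : ∀ i, M.V i →ₗ[k] N.V i}

theorem isHom_iff_ringelMap_eq_zero {f : ∀ i, M.V i →ₗ[k] N.V i} :
    IsHom M N f ↔ ringelMap M N f = 0 := by
  simp only [IsHom, ringelMap, LinearMap.coe_mk, AddHom.coe_mk, funext_iff, Pi.zero_apply,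
    sub_eq_zero]

theorem IsHom.ringelMap_comp (hπ : IsHom M N π) (f : ∀ i, L.V i →ₗ[k] M.V i) (a : Q1) :
    ringelMap L N (fun i => π i ∘ₗ f i) a = π (t a) ∘ₗ ringelMap L M f a := by
  simp only [ringelMap, LinearMap.coe_mk, AddHom.coe_mk, LinearMap.comp_sub]
  rw [← LinearMap.comp_assoc (f (s a)), ← hπ a, LinearMap.comp_assoc, LinearMap.comp_assoc]

theorem HasReducedEnd.injective_ringelMap (hM : M.HasReducedEnd) (hι : IsHom L M ι)
    (hπ : IsHom M N π) (hinj : ∀ i, Function.Injective (ι i))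
    (hsurj : ∀ i, Function.Surjective (π i)) (hπι : ∀ i, π i ∘ₗ ι i = 0) :
    Function.Injective (ringelMap N L) := by
  rw [← LinearMap.ker_eq_bot, LinearMap.ker_eq_bot']
  intro f hf
  have hιf := hM _ (hι.comp ((isHom_iff_ringelMap_eq_zero.mpr hf).comp hπ)) fun i => ?_
  · ext i w
    obtain ⟨v, rfl⟩ := hsurj i w
    exact hinj i ((LinearMap.congr_fun (congrFun hιf i) v).trans (map_zero (ι i)).symm)
  · ext v
    have hπι' := LinearMap.congr_fun (hπι i) (f i (π i v))
    simp only [LinearMap.comp_apply, LinearMap.zero_apply] at hπι' ⊢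
    rw [hπι', map_zero, map_zero]

theorem exists_isHom_comp_eq_id_of_surjective_ringelMap (hι : IsHom L M ι) (hπ : IsHom M N π)
    (hinj : ∀ i, Function.Injective (ι i)) (hsurj : ∀ i, Function.Surjective (π i))
    (hexact : ∀ i, Function.Exact (ι i) (π i)) (hringel : Function.Surjective (ringelMap N L)) :
    ∃ q : ∀ i, N.V i →ₗ[k] M.V i, IsHom N M q ∧ ∀ i, π i ∘ₗ q i = LinearMap.id := by
  choose r hrι using fun i =>
    (ι i).exists_leftInverse_of_injective (LinearMap.ker_eq_bot.mpr (hinj i))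
  choose q hπq using fun i =>
    (π i).exists_rightInverse_of_surjective (LinearMap.range_eq_top.mpr (hsurj i))
  obtain ⟨f, hf⟩ := hringel fun a => r (t a) ∘ₗ ringelMap N M q a
  have π_comp_ringelMap (a) : π (t a) ∘ₗ ringelMap N M q a = 0 := by
    rw [← hπ.ringelMap_comp, funext hπq, isHom_iff_ringelMap_eq_zero.mp (isHom_id N), Pi.zero_apply]
  have ι_comp_ringelMap (a) : ι (t a) ∘ₗ ringelMap N L f a = ringelMap N M q a := by
    rw [hf]
    ext w
    obtain ⟨u, hu⟩ := (hexact (t a) _).mp (LinearMap.congr_fun (π_comp_ringelMap a) w)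
    have hru : r (t a) (ι (t a) u) = u := LinearMap.congr_fun (hrι (t a)) u
    simp only [LinearMap.comp_apply, ← hu, hru]
  refine ⟨q - fun i => ι i ∘ₗ f i, isHom_iff_ringelMap_eq_zero.mpr ?_, fun i => ?_⟩
  · ext1 a
    rw [map_sub, Pi.sub_apply, hι.ringelMap_comp, ι_comp_ringelMap, sub_self, Pi.zero_apply]
  · rw [Pi.sub_apply, LinearMap.comp_sub, ← LinearMap.comp_assoc, (hexact i).linearMap_comp_eq_zero,
      LinearMap.zero_comp, sub_zero, hπq]

end RingelMap

section EulerForm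

variable {k : Type} [Field k] {Q0 Q1 : Type} [Fintype Q0] [Fintype Q1] {s t : Q1 → Q0}

/-- The Euler form `⟨dim M, dim N⟩` of two representations. -/
noncomputable def eulerForm (M N : QRep k s t) : ℤ :=
  euler s t (fun i => M.dimVec i) fun i => N.dimVec i

theorem eulerForm_eq_finrank_sub_finrank (M N : QRep k s t) :
    eulerForm M N = (Module.finrank k (∀ i, M.V i →ₗ[k] N.V i) : ℤ) -
      Module.finrank k (∀ a, M.V (s a) →ₗ[k] N.V (t a)) := by
  simp [eulerForm, euler, dimVec, Module.finrank_pi_fintype, Module.finrank_linearMap]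

theorem eulerForm_neg_of_injective_of_not_surjective {M N : QRep k s t}
    (hinj : Function.Injective (ringelMap M N)) (hsurj : ¬ Function.Surjective (ringelMap M N)) :
    eulerForm M N < 0 := by
  rw [eulerForm_eq_finrank_sub_finrank, sub_neg, Nat.cast_lt, ← LinearMap.finrank_range_of_inj hinj]
  exact Submodule.finrank_lt (mt LinearMap.range_eq_top.mp hsurj)

theorem eulerForm_neg_of_exact {L M N : QRep k s t} {ι : ∀ i, L.V i →ₗ[k] M.V i}
    {π : ∀ i, M.V i →ₗ[k] N.V i} (hM : Indecomposable s t k M) (hred : M.HasReducedEnd)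
    (hι : IsHom L M ι) (hπ : IsHom M N π) (hinj : ∀ i, Function.Injective (ι i))
    (hsurj : ∀ i, Function.Surjective (π i)) (hexact : ∀ i, Function.Exact (ι i) (π i))
    (hι0 : ∃ i, ι i ≠ 0) (hπ0 : ∃ i, π i ≠ 0) : eulerForm N L < 0 := by
  have hπι (i) : π i ∘ₗ ι i = 0 := (hexact i).linearMap_comp_eq_zero
  refine eulerForm_neg_of_injective_of_not_surjective
    (hred.injective_ringelMap hι hπ hinj hsurj hπι) fun hringel => ?_
  obtain ⟨q, hq, hπq⟩ :=
    exists_isHom_comp_eq_id_of_surjective_ringelMap hι hπ hinj hsurj hexact hringel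
  obtain hzero | hπinj := hM.eq_zero_or_injective_of_comp_eq_id hπ hq hπq
  · obtain ⟨i, hi⟩ := hπ0
    exact hi (hzero i)
  · obtain ⟨i, hi⟩ := hι0
    refine hi (LinearMap.ext fun u => hπinj i ?_)
    simpa using LinearMap.congr_fun (hπι i) u

theorem eulerForm_quotRep_subRep_neg {M : QRep k s t} (hM : Indecomposable s t k M)
    (hred : M.HasReducedEnd) {U : ∀ i, Submodule k (M.V i)} (hU : M.IsSubrep U)
    (hbot : U ≠ fun _ => ⊥) (htop : U ≠ fun _ => ⊤) :
    eulerForm (M.quotRep U hU) (M.subRep U hU) < 0 := by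
  refine eulerForm_neg_of_exact hM hred (isHom_subtype U hU) (isHom_mkQ U hU)
    (fun i => (U i).subtype_injective) (fun i => (U i).mkQ_surjective)
    (fun i => LinearMap.exact_subtype_mkQ (U i)) ?_ ?_
  · contrapose! hbot
    funext i
    rw [← (U i).range_subtype]
    exact LinearMap.range_eq_bot.mpr (hbot i)
  · contrapose! htop
    funext i
    rw [← (U i).ker_mkQ]
    exact LinearMap.ker_eq_top.mpr (htop i)

end EulerForm

end QRep

section CanonicalStability

variable {Q0 Q1 : Type} [Fintype Q0] [Fintype Q1] {s t : Q1 → Q0}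

theorem euler_add_left (x x' y : Q0 → ℤ) :
    euler s t (x + x') y = euler s t x y + euler s t x' y := by
  simp only [euler, Pi.add_apply, add_mul, Finset.sum_add_distrib]
  ring

theorem euler_add_right (x y y' : Q0 → ℤ) :
    euler s t x (y + y') = euler s t x y + euler s t x y' := by
  simp only [euler, Pi.add_apply, mul_add, Finset.sum_add_distrib]
  ring

theorem sum_euler_single_left_mul [DecidableEq Q0] (x y : Q0 → ℤ) :
    ∑ i, euler s t (Pi.single i 1) y * x i = euler s t x y := by
  simp only [euler, sub_mul, Finset.sum_mul, Finset.sum_sub_distrib]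
  congr 1
  · simp [Pi.single_apply, mul_comm]
  · rw [Finset.sum_comm]
    simp [Pi.single_apply, mul_comm]

theorem sum_euler_single_right_mul [DecidableEq Q0] (x y : Q0 → ℤ) :
    ∑ i, euler s t x (Pi.single i 1) * y i = euler s t x y := by
  simp only [euler, sub_mul, Finset.sum_mul, Finset.sum_sub_distrib]
  congr 1
  · simp [Pi.single_apply]
  · rw [Finset.sum_comm]
    simp [Pi.single_apply]

variable (s t) in
/-- The canonical stability parameter `θ_d = ⟨d, ·⟩ - ⟨·, d⟩`, as a vector of coefficients. -/
def canonicalStability [DecidableEq Q0] (d : Q0 → ℕ) (i : Q0) : ℝ :=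
  ((euler s t (fun j => (d j : ℤ)) (Pi.single i 1) -
    euler s t (Pi.single i 1) (fun j => (d j : ℤ)) : ℤ) : ℝ)

variable [DecidableEq Q0]

theorem pair_canonicalStability (d e : Q0 → ℕ) :
    QRep.pair (canonicalStability s t d) e =
      ((euler s t (fun i => (d i : ℤ)) (fun i => (e i : ℤ)) -
        euler s t (fun i => (e i : ℤ)) (fun i => (d i : ℤ)) : ℤ) : ℝ) := by
  rw [← sum_euler_single_left_mul (fun i => (e i : ℤ)),
    ← sum_euler_single_right_mul _ (fun i => (e i : ℤ)), ← Finset.sum_sub_distrib]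
  simp only [QRep.pair, canonicalStability, ← sub_mul]
  push_cast
  rfl

end CanonicalStability

namespace QRep

variable {k : Type} [Field k] {Q0 Q1 : Type} [Fintype Q0] {s t : Q1 → Q0} {M : QRep k s t}

section Canonical

variable [Fintype Q1] [DecidableEq Q0]

theorem pair_canonicalStability_subDim {U : ∀ i, Submodule k (M.V i)} (hU : M.IsSubrep U) :
    pair (canonicalStability s t M.dimVec) (M.subDim U) =
      ((eulerForm (M.quotRep U hU) (M.subRep U hU) -
        eulerForm (M.subRep U hU) (M.quotRep U hU) : ℤ) : ℝ) := by
  have hdim : (fun i => (M.dimVec i : ℤ)) =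
      (fun i => ((M.subRep U hU).dimVec i : ℤ)) + fun i => ((M.quotRep U hU).dimVec i : ℤ) := by
    rw [← dimVec_subRep_add_dimVec_quotRep hU]
    exact funext fun i => Nat.cast_add _ _
  rw [pair_canonicalStability, hdim, euler_add_left, euler_add_right, Int.cast_inj]
  exact add_sub_add_left_eq_sub _ _ _

theorem stable_canonicalStability (hM : Indecomposable s t k M) (hred : M.HasReducedEnd)
    (hext : ∀ U (hU : M.IsSubrep U), 0 ≤ eulerForm (M.subRep U hU) (M.quotRep U hU)) :
    Stable (canonicalStability s t M.dimVec) M := by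
  refine ⟨?_, fun U hU hbot htop => ?_⟩
  · rw [pair_canonicalStability, sub_self, Int.cast_zero]
  · rw [pair_canonicalStability_subDim hU]
    have hneg := eulerForm_quotRep_subRep_neg hM hred hU hbot htop
    exact_mod_cast sub_neg.mpr (hneg.trans_le (hext U hU))

end Canonical

section Stable

open Topology

variable {θ : Q0 → ℝ}

theorem Stable.semistable (h : Stable θ M) : Semistable θ M := by
  refine ⟨h.1, fun U hU => ?_⟩
  by_cases hbot : U = fun _ => ⊥
  · subst hbot
    simp [pair, subDim]
  by_cases htop : U = fun _ => ⊤
  · subst htop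
    exact (h.1.symm.trans (by simp [pair, subDim, dimVec])).ge
  · exact (h.2 U hU hbot htop).le

theorem Stable.mem_sstCone (h : Stable θ M) : θ ∈ SstCone k s t M.dimVec :=
  ⟨h.1, M, rfl, h.semistable⟩

theorem Stable.pair_neg_of_genericSub (h : Stable θ M) {e : Q0 → ℕ} (he0 : e ≠ 0)
    (hed : e ≠ M.dimVec) (he : GenericSub k s t e M.dimVec) : pair θ e < 0 := by
  obtain ⟨U, hU, rfl⟩ := he.2 M rfl
  refine h.2 U hU ?_ ?_
  · rintro rfl
    exact he0 (funext fun i => finrank_bot k (M.V i))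
  · rintro rfl
    exact hed (funext fun i => finrank_top k (M.V i))

theorem continuous_pair (d : Q0 → ℕ) : Continuous fun θ => pair θ d :=
  continuous_finsetSum _ fun i _ => (continuous_apply i).mul continuous_const

theorem Stable.eventually_nhds (h : Stable θ M) :
    ∀ᶠ η in 𝓝 θ, pair η M.dimVec = 0 → Stable η M := by
  classical
  have hfin : {e : Q0 → ℕ | e ≤ M.dimVec ∧ pair θ e < 0}.Finite :=
    (Set.finite_Iic M.dimVec).subset fun e he => he.1
  filter_upwards [(Filter.eventually_all_finite hfin).mpr fun e he =>
    (continuous_pair e).continuousAt.eventually_lt_const he.2] with η hη hηd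
  exact ⟨hηd, fun U hU hbot htop => hη _ ⟨subDim_le_dimVec U, h.2 U hU hbot htop⟩⟩

theorem Stable.span_sstCone (h : Stable θ M) :
    Submodule.span ℝ (SstCone k s t M.dimVec) =
      Submodule.span ℝ {η : Q0 → ℝ | pair η M.dimVec = 0} := by
  let H : Submodule ℝ (Q0 → ℝ) :=
    LinearMap.ker (Fintype.linearCombination ℝ fun i => (M.dimVec i : ℝ))
  have hH : {η : Q0 → ℝ | pair η M.dimVec = 0} = H := rfl
  rw [hH, Submodule.span_eq]
  refine span_eq_of_mem_nhdsWithin (fun η hη => hη.1) (x := θ) h.1 ?_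
  filter_upwards [eventually_nhdsWithin_of_eventually_nhds h.eventually_nhds,
    self_mem_nhdsWithin] with η hη hηd
  exact (hη hηd).mem_sstCone

end Stable

end QRep

section RepresentationSpace

open QRep

variable {k : Type} [Field k] {Q0 Q1 : Type} {s t : Q1 → Q0} {d : Q0 → ℕ}

instance [Fintype Q1] : Fintype (RepCoords s t d) :=
  inferInstanceAs (Fintype (Σ a : Q1, Fin (d (t a)) × Fin (d (s a))))

/-- The identification of the representation space with families of matrices, one for each arrow. -/
def repMatrix {R : Type*} :
    (RepCoords s t d → R) ≃ ∀ a : Q1, Matrix (Fin (d (t a))) (Fin (d (s a))) R where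
  toFun x a := .of fun r c => x ⟨a, r, c⟩
  invFun m j := m j.1 j.2.1 j.2.2

theorem repMatrix_comp_symm {R R' : Type*} (f : R → R')
    (m : ∀ a : Q1, Matrix (Fin (d (t a))) (Fin (d (s a))) R) (a : Q1) :
    repMatrix (fun j => f (repMatrix.symm m j)) a = (m a).map f :=
  rfl

/-- The representation with dimension vector `d` at a point of the representation space. -/
def repOfCoords (x : RepCoords s t d → k) : QRep k s t :=
  matToRep s t k d (repMatrix x)

theorem dimVec_repOfCoords (x : RepCoords s t d → k) : (repOfCoords x).dimVec = d :=
  funext fun _ => Module.finrank_fin_fun k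

theorem IsSchurRoot.eventually_indecomposable (hd : IsSchurRoot s t k d) :
    ∀ᶠ x in zariskiGeneric (RepCoords s t d) k, Indecomposable s t k (repOfCoords x) := by
  obtain ⟨p, hp, hpd⟩ := hd
  exact ⟨p, hp, fun x hx => hpd (repMatrix x) hx⟩

theorem IsSchurRoot.eventually_hasReducedEnd [Infinite k] (hd : IsSchurRoot s t k d) :
    ∀ᶠ x in zariskiGeneric (RepCoords s t d) k, (repOfCoords x).HasReducedEnd := by
  filter_upwards [eventually_forall_exists_add_smul hd.eventually_indecomposable] with x hx f hf hsq
  obtain ⟨N, hN⟩ := exists_deformation_isIdempotentElem (repOfCoords x).hom f hsq hf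
  let v : RepCoords s t d → k := fun j => LinearMap.toMatrix' (N j.1) j.2.1 j.2.2
  obtain ⟨c, hc0, hind⟩ := hx v
  obtain ⟨e, hidem, hcomm, hef⟩ := hN c hc0
  have hom_eq (a : Q1) :
      (repOfCoords (x + c • v)).hom a = (repOfCoords x).hom a + c • N a := by
    have hv : (repMatrix v a).mulVecLin = N a := Matrix.toLin'_toMatrix' (N a)
    rw [← hv]
    refine LinearMap.ext fun w => ?_
    exact (Matrix.add_mulVec _ _ w).trans (congrArg _ (Matrix.smul_mulVec c (repMatrix v a) w))
  have he : IsHom (repOfCoords (x + c • v)) (repOfCoords (x + c • v)) e := fun a => by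
    rw [hom_eq]
    exact hcomm a
  funext i
  obtain hzero | hid := hind.eq_zero_or_eq_id he hidem
  · exact (hef i).1.symm.trans (by rw [hzero i]; exact LinearMap.zero_comp (f i))
  · exact Eq.trans (by rw [hid i]; exact (LinearMap.comp_id (f i)).symm) (hef i).2

/-- The family of matrices `(1 + F) B (1 - F)`. When `F` squares to zero, this is the base change of
`B` by the unipotent `1 + F`. -/
def unipotentConj {R : Type*} [CommRing R] (F : ∀ i, Matrix (Fin (d i)) (Fin (d i)) R)
    (B : ∀ a : Q1, Matrix (Fin (d (t a))) (Fin (d (s a))) R) (a : Q1) :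
    Matrix (Fin (d (t a))) (Fin (d (s a))) R :=
  (1 + F (t a)) * B a * (1 - F (s a))

theorem map_unipotentConj {R R' : Type*} [CommRing R] [CommRing R'] (f : R →+* R')
    (F : ∀ i, Matrix (Fin (d i)) (Fin (d i)) R)
    (B : ∀ a : Q1, Matrix (Fin (d (t a))) (Fin (d (s a))) R) (a : Q1) :
    (unipotentConj F B a).map f =
      unipotentConj (fun i => (F i).map f) (fun a => (B a).map f) a := by
  simp [unipotentConj, Matrix.map_mul, Matrix.map_add, Matrix.map_sub]

theorem unipotentConj_unipotentConj_neg {R : Type*} [CommRing R]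
    {F : ∀ i, Matrix (Fin (d i)) (Fin (d i)) R} (hF : ∀ i, F i * F i = 0)
    (B : ∀ a : Q1, Matrix (Fin (d (t a))) (Fin (d (s a))) R) :
    unipotentConj F (unipotentConj (fun i => -F i) B) = B := by
  funext a
  have mul_sub_eq_one (i) : (1 + F i) * (1 - F i) = 1 := by
    rw [add_mul, mul_sub, mul_sub, hF]
    simp
  calc unipotentConj F (unipotentConj (fun i => -F i) B) a
      = ((1 + F (t a)) * (1 - F (t a))) * B a * ((1 + F (s a)) * (1 - F (s a))) := by
        simp only [unipotentConj, ← sub_eq_add_neg, sub_neg_eq_add, Matrix.mul_assoc]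
    _ = B a := by rw [mul_sub_eq_one, mul_sub_eq_one, Matrix.one_mul, Matrix.mul_one]

theorem QRep.IsSubrep.exists_repMatrix_eq_unipotentConj {x : RepCoords s t d → k}
    {U : ∀ i, Submodule k ((repOfCoords x).V i)} (hU : (repOfCoords x).IsSubrep U) :
    ∃ S : ∀ i, Finset (Fin (d i)), (∀ i, (S i).card = ((repOfCoords x).quotRep U hU).dimVec i) ∧
      ∃ (F : ∀ i, Matrix (Fin (d i)) (Fin (d i)) k)
          (B : ∀ a, Matrix (Fin (d (t a))) (Fin (d (s a))) k),
        (∀ i r c, ¬ (r ∈ S i ∧ c ∉ S i) → F i r c = 0) ∧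
        (∀ a r c, r ∈ S (t a) → c ∉ S (s a) → B a r c = 0) ∧ repMatrix x = unipotentConj F B := by
  choose S F hS hF hmem using fun i => exists_matrix_mem_iff_sub_mulVec_eq_zero (U i)
  have hFF (i) : F i * F i = 0 := mul_self_eq_zero_of_apply_eq_zero (hF i)
  refine ⟨S, hS, F, unipotentConj (fun i => -F i) (repMatrix x), hF, fun a r c hr hc => ?_,
    (unipotentConj_unipotentConj_neg hFF _).symm⟩
  have hcol : (1 + F (s a)).mulVec (Pi.single c 1) ∈ U (s a) := by
    have sub_mul_eq_one : (1 - F (s a)) * (1 + F (s a)) = 1 := by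
      rw [sub_mul, mul_add, mul_add, hFF]
      simp
    refine (hmem _ _).mpr fun r' hr' => ?_
    rw [Matrix.mulVec_mulVec, sub_mul_eq_one, Matrix.one_mulVec]
    exact Pi.single_eq_of_ne (fun h => hc (by rwa [← h])) 1
  calc unipotentConj (fun i => -F i) (repMatrix x) a r c
      = ((1 - F (t a)) * repMatrix x a * (1 + F (s a))).mulVec (Pi.single c 1) r := by
        rw [Matrix.mulVec_single_one, unipotentConj, sub_neg_eq_add, ← sub_eq_add_neg]
        rfl
    _ = (1 - F (t a)).mulVec ((repOfCoords x).hom a ((1 + F (s a)).mulVec (Pi.single c 1))) r := by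
        rw [← Matrix.mulVec_mulVec, ← Matrix.mulVec_mulVec]
        rfl
    _ = 0 := (hmem _ _).mp (hU a _ hcol) r hr

section DimensionCount

variable [Fintype Q0] [Fintype Q1]

open MvPolynomial in
theorem eventually_forall_ne_unipotentConj (S : ∀ i, Finset (Fin (d i)))
    (hS : euler s t (fun i => (S i)ᶜ.card) (fun i => (S i).card) < 0) :
    ∀ᶠ x in zariskiGeneric (RepCoords s t d) k,
      ∀ (F : ∀ i, Matrix (Fin (d i)) (Fin (d i)) k)
          (B : ∀ a, Matrix (Fin (d (t a))) (Fin (d (s a))) k),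
        (∀ i r c, ¬ (r ∈ S i ∧ c ∉ S i) → F i r c = 0) →
        (∀ a r c, r ∈ S (t a) → c ∉ S (s a) → B a r c = 0) → repMatrix x ≠ unipotentConj F B := by
  classical
  let P : RepCoords s t d →
      MvPolynomial ((Σ i, Fin (d i) × Fin (d i)) ⊕ (Σ a, Fin (d (t a)) × Fin (d (s a)))) k :=
    repMatrix.symm (unipotentConj (fun i => .of fun r c => X (.inl ⟨i, r, c⟩))
      fun a => .of fun r c => X (.inr ⟨a, r, c⟩))
  let T₁ : Finset (Σ i, Fin (d i) × Fin (d i)) := Finset.univ.sigma fun i => S i ×ˢ (S i)ᶜ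
  let T₂ : Finset (Σ a, Fin (d (t a)) × Fin (d (s a))) :=
    Finset.univ.sigma fun a => S (t a) ×ˢ (S (s a))ᶜ
  have hT : (T₁.disjSum T₂ᶜ).card < Fintype.card (RepCoords s t d) := by
    have hcard : T₁.card < T₂.card := by
      zify
      simpa [T₁, T₂, euler, Finset.card_sigma, mul_comm] using hS
    calc (T₁.disjSum T₂ᶜ).card = T₁.card + T₂ᶜ.card := Finset.card_disjSum _ _
      _ < T₂.card + T₂ᶜ.card := by gcongr
      _ = Fintype.card (RepCoords s t d) := Finset.card_add_card_compl T₂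
  filter_upwards [eventually_forall_ne_eval P _ hT] with x hx F B hF hB hxFB
  let z : (Σ i, Fin (d i) × Fin (d i)) ⊕ (Σ a, Fin (d (t a)) × Fin (d (s a))) → k :=
    Sum.elim (fun j => F j.1 j.2.1 j.2.2) fun j => B j.1 j.2.1 j.2.2
  have eval_P : repMatrix (fun j => eval z (P j)) = unipotentConj F B := by
    funext a
    rw [repMatrix_comp_symm, map_unipotentConj]
    refine congrArg₂ (unipotentConj · · a) (funext fun i => ?_) (funext fun b => ?_) <;>
    · ext r c
      exact eval_X _
  refine hx z ?_ (repMatrix.injective (hxFB.trans eval_P.symm))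
  rintro (⟨i, r, c⟩ | ⟨a, r, c⟩) hj
  · exact hF i r c (by simpa [T₁] using hj)
  · obtain ⟨hr, hc⟩ : r ∈ S (t a) ∧ c ∉ S (s a) := by simpa [T₂] using hj
    exact hB a r c hr hc

theorem eventually_forall_isSubrep_eulerForm_nonneg :
    ∀ᶠ x in zariskiGeneric (RepCoords s t d) k, ∀ U (hU : (repOfCoords x).IsSubrep U),
      0 ≤ eulerForm ((repOfCoords x).subRep U hU) ((repOfCoords x).quotRep U hU) := by
  filter_upwards [Filter.eventually_all.mpr fun S =>
    Filter.eventually_imp_distrib_left.mpr (eventually_forall_ne_unipotentConj S)] with x hx U hU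
  obtain ⟨S, hS, F, B, hF, hB, hxFB⟩ := hU.exists_repMatrix_eq_unipotentConj
  by_contra! hneg
  have hSc (i) : (S i)ᶜ.card = ((repOfCoords x).subRep U hU).dimVec i := by
    have hdim := congrFun (dimVec_subRep_add_dimVec_quotRep hU) i
    rw [Pi.add_apply, dimVec_repOfCoords, ← hS i] at hdim
    rw [Finset.card_compl, Fintype.card_fin]
    omega
  refine hx S ?_ F B hF hB hxFB
  simpa only [hSc, hS, eulerForm] using hneg

end DimensionCount

theorem IsSchurRoot.exists_stable [Infinite k] [Fintype Q0] [Fintype Q1] [DecidableEq Q0]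
    (hd : IsSchurRoot s t k d) :
    ∃ M : QRep k s t, M.dimVec = d ∧ Stable (canonicalStability s t d) M := by
  obtain ⟨x, ⟨hind, hred⟩, hext⟩ := ((hd.eventually_indecomposable.and
    hd.eventually_hasReducedEnd).and eventually_forall_isSubrep_eulerForm_nonneg).exists
  have hdim := dimVec_repOfCoords x
  refine ⟨_, hdim, ?_⟩
  have hstable := stable_canonicalStability hind hred hext
  rwa [hdim] at hstable

end RepresentationSpace

theorem stmt15_general (k : Type) [Field k] [Infinite k]
    {Q0 Q1 : Type} [Fintype Q0] [Fintype Q1] [DecidableEq Q0] (s t : Q1 → Q0)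
    (d : Q0 → ℕ) (hschur : IsSchurRoot s t k d) (θd : Q0 → ℝ)
    (hθd : ∀ i, θd i =
      ((euler s t (fun j => (d j : ℤ)) (Pi.single i 1) -
        euler s t (Pi.single i 1) (fun j => (d j : ℤ)) : ℤ) : ℝ)) :
    ∃ ε > (0 : ℝ),
      (∀ η : Q0 → ℝ, QRep.pair η d = 0 → ‖η - θd‖ < ε →
        ∀ e : Q0 → ℕ, e ≠ 0 → e ≠ d → GenericSub k s t e d → QRep.pair η e < 0) ∧
      (∀ η : Q0 → ℝ, QRep.pair η d = 0 → ‖η - θd‖ < ε → η ∈ SstCone k s t d) ∧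
      Submodule.span ℝ (SstCone k s t d) =
        Submodule.span ℝ {θ : Q0 → ℝ | QRep.pair θ d = 0} := by
  obtain rfl : θd = canonicalStability s t d := funext hθd
  obtain ⟨M, rfl, hM⟩ := hschur.exists_stable
  obtain ⟨ε, hε, hstable⟩ := Metric.eventually_nhds_iff.mp hM.eventually_nhds
  simp only [dist_eq_norm] at hstable
  exact ⟨ε, hε, fun η hηd hη e he0 hed he => (hstable hη hηd).pair_neg_of_genericSub he0 hed he,
    fun η hηd hη => (hstable hη hηd).mem_sstCone, hM.span_sstCone⟩

/-- if `d` is a Schur root, there is a ball around the canonical stability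
parameter `θ_d` in the stability space on which `η(e) < 0` for all proper nonzero generic
`e ↪ d`; consequently the ball lies in the semistable cone, which spans the stability space. -/
theorem stmt15 (k : Type) [Field k] [IsAlgClosed k] [CharZero k]
    {Q0 Q1 : Type} [Fintype Q0] [Fintype Q1] [DecidableEq Q0] (s t : Q1 → Q0)
    (d : Q0 → ℕ) (hschur : IsSchurRoot s t k d) (θd : Q0 → ℝ)
    (hθd : ∀ i, θd i =
      ((euler s t (fun j => (d j : ℤ)) (Pi.single i 1) -
        euler s t (Pi.single i 1) (fun j => (d j : ℤ)) : ℤ) : ℝ)) :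
    ∃ ε > (0 : ℝ),
      (∀ η : Q0 → ℝ, QRep.pair η d = 0 → ‖η - θd‖ < ε →
        ∀ e : Q0 → ℕ, e ≠ 0 → e ≠ d → GenericSub k s t e d → QRep.pair η e < 0) ∧
      (∀ η : Q0 → ℝ, QRep.pair η d = 0 → ‖η - θd‖ < ε → η ∈ SstCone k s t d) ∧
      Submodule.span ℝ (SstCone k s t d) =
        Submodule.span ℝ {θ : Q0 → ℝ | QRep.pair θ d = 0} := by
  have : Infinite k := CharZero.infinite k
  exact stmt15_general k s t d hschur θd hθd
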